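/- Suppose X'X/n → Q with Q symmetric positive definite. Then β̃ is uniformly √n-consistent for β: lim_{M→∞} sup_{n≥k} sup_{β∈ℝ^k} P_{n,β,σ}(√n‖β̃ − β‖ ≥ M) = 0. Consequently, for every ε > 0 and any sequence of real numbers c_n ≥ 0 with c_n = o(n^{1/2}), lim_{n→∞} sup_{β∈ℝ^k} P_{n,β,σ}(c_n‖β̃ − β‖ ≥ ε) = 0. -/

import Mathlib

open MeasureTheory Matrix Real Filter Topology ENNReal NNReal

noncomputable section

/-- Euclidean norm of a finite tuple. -/
def enorm2 {ι : Type*} [Fintype ι] (v : ι → ℝ) : ℝ := Real.sqrt (∑ i, v i ^ 2)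

/-- The `N(0, σ² I)` distribution on `ι → ℝ`, given by its Lebesgue density. -/
def gaussPi (ι : Type*) [Fintype ι] (σ2 : ℝ) : Measure (ι → ℝ) :=
  volume.withDensity fun x => ENNReal.ofReal
    ((2 * π * σ2) ^ (-(Fintype.card ι : ℝ) / 2) * Real.exp (-(enorm2 x) ^ 2 / (2 * σ2)))

/-- The Lebesgue density of the `N(0, σ² Q⁻¹)` distribution on `ι → ℝ`
(for `Q` symmetric positive definite). -/
def gaussCovDens {ι : Type*} [Fintype ι] [DecidableEq ι] (σ2 : ℝ) (Q : Matrix ι ι ℝ)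
    (x : ι → ℝ) : ℝ :=
  (2 * π * σ2) ^ (-(Fintype.card ι : ℝ) / 2) * Real.sqrt Q.det *
    Real.exp (-(x ⬝ᵥ Q.mulVec x) / (2 * σ2))

/-- The `N(0, σ² Q⁻¹)` distribution on `ι → ℝ` (for `Q` symmetric positive definite),
given by its Lebesgue density. -/
def gaussCov {ι : Type*} [Fintype ι] [DecidableEq ι] (σ2 : ℝ) (Q : Matrix ι ι ℝ) :
    Measure (ι → ℝ) :=
  volume.withDensity fun x => ENNReal.ofReal (gaussCovDens σ2 Q x)

open Classical in
/-- Symmetric positive semidefinite square root (junk value `0` off the psd cone). -/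
def msqrt {ι : Type*} [Fintype ι] [DecidableEq ι] (A : Matrix ι ι ℝ) : Matrix ι ι ℝ :=
  if h : A.PosSemidef then
    (h.1.eigenvectorUnitary : Matrix ι ι ℝ) * diagonal (Real.sqrt ∘ h.1.eigenvalues) *
      (star h.1.eigenvectorUnitary : Matrix ι ι ℝ) else 0

open Classical in
/-- Smallest eigenvalue of a symmetric matrix (junk value `0` otherwise). -/
def lamMin {ι : Type*} [Fintype ι] [DecidableEq ι] (A : Matrix ι ι ℝ) : ℝ :=
  if h : A.IsHermitian then ⨅ i, h.eigenvalues i else 0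

open Classical in
/-- Largest eigenvalue of a symmetric matrix (junk value `0` otherwise). -/
def lamMax {ι : Type*} [Fintype ι] [DecidableEq ι] (A : Matrix ι ι ℝ) : ℝ :=
  if h : A.IsHermitian then ⨆ i, h.eigenvalues i else 0

variable {n k₁ k₂ : ℕ}

/-- First block of columns of the design matrix. -/
def X1 (X : Matrix (Fin n) (Fin k₁ ⊕ Fin k₂) ℝ) : Matrix (Fin n) (Fin k₁) ℝ :=
  X.submatrix id Sum.inl

/-- Second block of columns of the design matrix. -/
def X2 (X : Matrix (Fin n) (Fin k₁ ⊕ Fin k₂) ℝ) : Matrix (Fin n) (Fin k₂) ℝ :=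
  X.submatrix id Sum.inr

/-- Unrestricted least squares estimator. -/
def betaU (X : Matrix (Fin n) (Fin k₁ ⊕ Fin k₂) ℝ) (Y : Fin n → ℝ) : (Fin k₁ ⊕ Fin k₂) → ℝ :=
  (Xᵀ * X)⁻¹.mulVec (Xᵀ.mulVec Y)

/-- Restricted least squares estimator. -/
def betaR (X : Matrix (Fin n) (Fin k₁ ⊕ Fin k₂) ℝ) (Y : Fin n → ℝ) : (Fin k₁ ⊕ Fin k₂) → ℝ :=
  Sum.elim (((X1 X)ᵀ * X1 X)⁻¹.mulVec ((X1 X)ᵀ.mulVec Y)) (fun _ => 0)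

/-- Risk estimate of the restricted model. -/
def rR (X : Matrix (Fin n) (Fin k₁ ⊕ Fin k₂) ℝ) (σ2 : ℝ) (Y : Fin n → ℝ) : ℝ :=
  Y ⬝ᵥ Y - betaR X Y ⬝ᵥ (Xᵀ * X).mulVec (betaR X Y) + σ2 * (2 * k₁ - n)

/-- Risk estimate of the unrestricted model. -/
def rU (X : Matrix (Fin n) (Fin k₁ ⊕ Fin k₂) ℝ) (σ2 : ℝ) (Y : Fin n → ℝ) : ℝ :=
  Y ⬝ᵥ Y - betaU X Y ⬝ᵥ (Xᵀ * X).mulVec (betaU X Y) + σ2 * (2 * (k₁ + k₂) - n)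

/-- The model averaging weight `λ̂`. -/
def lamHat (α σ2 : ℝ) (X : Matrix (Fin n) (Fin k₁ ⊕ Fin k₂) ℝ) (Y : Fin n → ℝ) : ℝ :=
  Real.exp (-(α * rR X σ2 Y) / σ2) /
    (Real.exp (-(α * rR X σ2 Y) / σ2) + Real.exp (-(α * rU X σ2 Y) / σ2))

/-- Leung and Barron's model averaging estimator `β̃`. -/
def mavg (α σ2 : ℝ) (X : Matrix (Fin n) (Fin k₁ ⊕ Fin k₂) ℝ) (Y : Fin n → ℝ) :
    (Fin k₁ ⊕ Fin k₂) → ℝ :=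
  lamHat α σ2 X Y • betaR X Y + (1 - lamHat α σ2 X Y) • betaU X Y

/-- Projection on the column space of `X₁`. -/
def projR (X : Matrix (Fin n) (Fin k₁ ⊕ Fin k₂) ℝ) : Matrix (Fin n) (Fin n) ℝ :=
  X1 X * ((X1 X)ᵀ * X1 X)⁻¹ * (X1 X)ᵀ

/-- Projection on the column space of `X`. -/
def projU (X : Matrix (Fin n) (Fin k₁ ⊕ Fin k₂) ℝ) : Matrix (Fin n) (Fin n) ℝ :=
  X * (Xᵀ * X)⁻¹ * Xᵀ

/-- The distribution `P_{n,β,σ}` of `Y = Xβ + u`, `u ~ N(0, σ² Iₙ)`. -/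
def Pmeas (X : Matrix (Fin n) (Fin k₁ ⊕ Fin k₂) ℝ) (β : (Fin k₁ ⊕ Fin k₂) → ℝ) (σ2 : ℝ) :
    Measure (Fin n → ℝ) :=
  (gaussPi (Fin n) σ2).map (fun u => X.mulVec β + u)

/-- The function `h_{a,b}(ξ) = ξ / (1 + a exp(−ξ²/b))`. -/
def hfun (a b ξ : ℝ) : ℝ := ξ / (1 + a * Real.exp (-ξ ^ 2 / b))

/-- The inverse `g_{a,b}` of `h_{a,b}`. -/
def gfun (a b : ℝ) : ℝ → ℝ := Function.invFun (hfun a b)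

open Classical in
/-- `g(‖w‖) w / ‖w‖`, with the convention that this is `0` for `w = 0`. -/
def gdir (a b : ℝ) {ι : Type*} [Fintype ι] (w : ι → ℝ) : ι → ℝ :=
  if w = 0 then 0 else (gfun a b (enorm2 w) / enorm2 w) • w


/-- The finite-sample density `f_{n,β,σ}` of `√n(β̃ − β)` (Theorem 3 of the paper). -/
def fdens {n k₁ k₂ : ℕ} (X : Matrix (Fin n) (Fin k₁ ⊕ Fin k₂) ℝ)
    (β : (Fin k₁ ⊕ Fin k₂) → ℝ) (σ2 α : ℝ) (t : (Fin k₁ ⊕ Fin k₂) → ℝ) : ℝ :=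
  let a := Real.exp (2 * α * k₂)
  let b := σ2 / α
  let S := (X2 X)ᵀ * (1 - projR X) * X2 X
  let w := (Real.sqrt n)⁻¹ • (msqrt S).mulVec ((t ∘ Sum.inr) + Real.sqrt n • (β ∘ Sum.inr))
  (2 * π * σ2) ^ (-((k₁ : ℝ) + k₂) / 2) * Real.sqrt (((n : ℝ)⁻¹ • (Xᵀ * X)).det) *
    Real.exp (-(enorm2 ((Real.sqrt n)⁻¹ •
        ((msqrt ((X1 X)ᵀ * X1 X)).mulVec (t ∘ Sum.inl) +
          ((msqrt ((X1 X)ᵀ * X1 X))⁻¹ * (X1 X)ᵀ * X2 X).mulVec (t ∘ Sum.inr)))) ^ 2 /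
      (2 * σ2)) *
    (1 + Real.exp (-(α / σ2) * gfun a b (enorm2 w) ^ 2 + 2 * α * k₂)) ^ (k₂ : ℕ) *
    (1 + (2 * α / σ2) * gfun a b (enorm2 w) ^ 2 *
        (1 + Real.exp ((α / σ2) * gfun a b (enorm2 w) ^ 2 - 2 * α * k₂))⁻¹)⁻¹ *
    Real.exp (-(enorm2 (gdir a b w - (msqrt S).mulVec (β ∘ Sum.inr))) ^ 2 / (2 * σ2))

/-- The density `f_{∞,γ}` of the limiting distribution (formula (13) of the paper),
stated for a general symmetric positive definite matrix in place of `Q`. -/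
def fInfty {k₁ k₂ : ℕ} (Q : Matrix (Fin k₁ ⊕ Fin k₂) (Fin k₁ ⊕ Fin k₂) ℝ) (σ2 α : ℝ)
    (γ : Fin k₂ → ℝ) (t : (Fin k₁ ⊕ Fin k₂) → ℝ) : ℝ :=
  let a := Real.exp (2 * α * k₂)
  let b := σ2 / α
  let S := Q.toBlocks₂₂ - Q.toBlocks₂₁ * Q.toBlocks₁₁⁻¹ * Q.toBlocks₁₂
  let w := (msqrt S).mulVec ((t ∘ Sum.inr) + γ)
  (2 * π * σ2) ^ (-((k₁ : ℝ) + k₂) / 2) * Real.sqrt Q.det *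
    Real.exp (-(enorm2 ((msqrt Q.toBlocks₁₁).mulVec (t ∘ Sum.inl) +
        ((msqrt Q.toBlocks₁₁)⁻¹ * Q.toBlocks₁₂).mulVec (t ∘ Sum.inr))) ^ 2 / (2 * σ2)) *
    (1 + Real.exp (-(α / σ2) * gfun a b (enorm2 w) ^ 2 + 2 * α * k₂)) ^ (k₂ : ℕ) *
    (1 + (2 * α / σ2) * gfun a b (enorm2 w) ^ 2 *
        (1 + Real.exp ((α / σ2) * gfun a b (enorm2 w) ^ 2 - 2 * α * k₂))⁻¹)⁻¹ *
    Real.exp (-(enorm2 (gdir a b w - (msqrt S).mulVec γ)) ^ 2 / (2 * σ2))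

/-!
With `Y = Xβ + u`, the error `β̃ - β` is the image of the noise `u` under unrestricted least squares
minus the averaging bias `λ̂ (β̂(U) - β̂(R))`. In the metric of `X'X`, the weight `λ̂` is a sigmoid
decaying exponentially in `α/σ² · ‖Xβ̂(U) - Xβ̂(R)‖²`, so `x e⁻ˣ ≤ 1` bounds the squared length of
the bias by `e^{2αk₂} σ²/α`, whatever `β`, `n` and `u` are. The noise term becomes the projection of
`u` onto a space of dimension `k`, whose expected squared length is at most `k` times the variance,
and Markov's inequality bounds its tails. Finally `λ_min(X'X/n)` stays away from `0` because
`λ_min(A)⁻¹ ≤ tr A⁻¹` and `tr (X'X/n)⁻¹ → tr Q⁻¹`, which turns these bounds into `√n`-bounds for the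
Euclidean norm.
-/

section QuadraticForm

variable {ι : Type*} [Fintype ι]

lemma enorm2_sq (v : ι → ℝ) : enorm2 v ^ 2 = v ⬝ᵥ v := by
  simp only [enorm2, dotProduct, ← sq]
  exact Real.sq_sqrt (Finset.sum_nonneg fun i _ => sq_nonneg (v i))

lemma sub_dotProduct_sub_self_le (x y : ι → ℝ) :
    (x - y) ⬝ᵥ (x - y) ≤ 2 * (x ⬝ᵥ x + y ⬝ᵥ y) := by
  have h : 0 ≤ (x + y) ⬝ᵥ (x + y) := dotProduct_star_self_nonneg (x + y)
  simp only [sub_dotProduct, dotProduct_sub, add_dotProduct, dotProduct_add] at h ⊢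
  linarith

lemma sq_dotProduct_mulVec_le {A : Matrix ι ι ℝ} (hA : A.PosSemidef) (x y : ι → ℝ) :
    (x ⬝ᵥ A *ᵥ y) ^ 2 ≤ (x ⬝ᵥ A *ᵥ x) * (y ⬝ᵥ A *ᵥ y) := by
  classical
  have hA_symm : Aᵀ = A := by rw [← conjTranspose_eq_transpose_of_trivial, hA.1.eq]
  have hsymm : LinearMap.IsSymm (toBilin' A) := ⟨fun v w => by
    simp only [RingHom.id_apply, toBilin'_apply']
    rw [dotProduct_mulVec, ← mulVec_transpose, hA_symm, dotProduct_comm]⟩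
  have hnonneg (v : ι → ℝ) : 0 ≤ toBilin' A v v := by
    simpa only [toBilin'_apply', star_trivial] using hA.dotProduct_mulVec_nonneg v
  simpa only [toBilin'_apply'] using (toBilin' A).apply_sq_le_of_symm hnonneg hsymm x y

lemma dotProduct_self_le_trace_inv_mul [DecidableEq ι] {A : Matrix ι ι ℝ} (hA : A.PosDef)
    (v : ι → ℝ) : v ⬝ᵥ v ≤ A⁻¹.trace * (v ⬝ᵥ A *ᵥ v) := by
  have hcancel (w : ι → ℝ) : A⁻¹ *ᵥ A *ᵥ w = w := by
    rw [mulVec_mulVec, nonsing_inv_mul _ ((isUnit_iff_isUnit_det A).1 hA.isUnit), one_mulVec]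
  rw [dotProduct, Matrix.trace, Finset.sum_mul]
  refine Finset.sum_le_sum fun i _ => ?_
  -- `v i` is the product of `eᵢ` and `A v` in the inner product given by `A⁻¹`.
  have h := sq_dotProduct_mulVec_le hA.inv.posSemidef (Pi.single i 1) (A *ᵥ v)
  rw [hcancel] at h
  simpa [sq, dotProduct_comm (A *ᵥ v) v] using h

lemma exists_pos_forall_mul_dotProduct_self_le {A : ℕ → Matrix ι ι ℝ} {Q : Matrix ι ι ℝ} {N : ℕ}
    (hA : ∀ n, N ≤ n → (A n).PosDef) (hQ : Q.PosDef) (hlim : Tendsto A atTop (𝓝 Q)) :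
    ∃ c : ℝ, 0 < c ∧ ∀ n, N ≤ n → ∀ v, c * (v ⬝ᵥ v) ≤ v ⬝ᵥ A n *ᵥ v := by
  classical
  have hinv : ContinuousAt Inv.inv Q := by
    refine continuousAt_matrix_inv Q ?_
    rw [Ring.inverse_eq_inv']
    exact continuousAt_inv₀ hQ.det_pos.ne'
  have htrace : Tendsto (fun n => (A n)⁻¹.trace) atTop (𝓝 Q⁻¹.trace) :=
    (continuous_id.matrix_trace.tendsto _).comp (hinv.tendsto.comp hlim)
  obtain ⟨B, hB⟩ := htrace.bddAbove_range
  refine ⟨(max B 1)⁻¹, by positivity, fun n hn v => ?_⟩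
  rw [inv_mul_le_iff₀ (by positivity)]
  calc v ⬝ᵥ v
    _ ≤ (A n)⁻¹.trace * (v ⬝ᵥ A n *ᵥ v) := dotProduct_self_le_trace_inv_mul (hA n hn) v
    _ ≤ max B 1 * (v ⬝ᵥ A n *ᵥ v) := by
      gcongr
      · exact (hA n hn).posSemidef.dotProduct_mulVec_nonneg v
      · exact (hB ⟨n, rfl⟩).trans (le_max_left _ _)

end QuadraticForm

section LeastSquares

variable {m ι : Type*} [Fintype ι]

lemma mulVec_injective_of_rank_eq_card {A : Matrix m ι ℝ} (h : A.rank = Fintype.card ι) :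
    Function.Injective A.mulVec := by
  rw [mulVec_injective_iff, linearIndependent_iff_card_eq_finrank_span, ← h,
    rank_eq_finrank_span_cols, Set.finrank]

variable [Fintype m]

lemma mulVec_injective_of_forall_mul_le {A : Matrix m ι ℝ} {c : ℝ} (hc : 0 < c)
    (hA : ∀ v, c * (v ⬝ᵥ v) ≤ A *ᵥ v ⬝ᵥ A *ᵥ v) : Function.Injective A.mulVec := by
  refine (injective_iff_map_eq_zero A.mulVecLin).2 fun v hv => ?_
  have h := hA v
  rw [← mulVecLin_apply, hv, dotProduct_zero] at h
  have hnonneg : 0 ≤ v ⬝ᵥ v := dotProduct_star_self_nonneg v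
  exact dotProduct_self_eq_zero.1 (by nlinarith)

lemma posDef_transpose_mul_self {A : Matrix m ι ℝ} (hA : Function.Injective A.mulVec) :
    (Aᵀ * A).PosDef := by
  simpa only [conjTranspose_eq_transpose_of_trivial] using PosDef.conjTranspose_mul_self A hA

lemma dotProduct_transpose_mul_self_mulVec (A : Matrix m ι ℝ) (v w : ι → ℝ) :
    v ⬝ᵥ (Aᵀ * A) *ᵥ w = A *ᵥ v ⬝ᵥ A *ᵥ w := by
  rw [← mulVec_mulVec, dotProduct_mulVec, vecMul_transpose]

variable [DecidableEq ι]

lemma isUnit_det_transpose_mul_self {A : Matrix m ι ℝ} (hA : Function.Injective A.mulVec) :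
    IsUnit (Aᵀ * A).det :=
  (posDef_transpose_mul_self hA).det_pos.ne'.isUnit

/-- The least squares coefficients of the regression of `Y` on the columns of `A`, written with
the normal equations; meaningful when `A` has full column rank. -/
def leastSquares (A : Matrix m ι ℝ) (Y : m → ℝ) : ι → ℝ :=
  (Aᵀ * A)⁻¹ *ᵥ Aᵀ *ᵥ Y

/-- The matrix taking `Y` to the fitted values of its regression on the columns of `A`, that is,
the orthogonal projection onto the column space when `A` has full column rank. -/
def hatMatrix (A : Matrix m ι ℝ) : Matrix m m ℝ :=
  A * (Aᵀ * A)⁻¹ * Aᵀ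

variable {A : Matrix m ι ℝ}

lemma mulVec_leastSquares (A : Matrix m ι ℝ) (Y : m → ℝ) :
    A *ᵥ leastSquares A Y = hatMatrix A *ᵥ Y := by
  simp only [leastSquares, hatMatrix, mulVec_mulVec, Matrix.mul_assoc]

lemma mulVec_dotProduct_mulVec_leastSquares (hA : Function.Injective A.mulVec) (v : ι → ℝ)
    (Y : m → ℝ) : A *ᵥ v ⬝ᵥ A *ᵥ leastSquares A Y = A *ᵥ v ⬝ᵥ Y := by
  rw [← dotProduct_transpose_mul_self_mulVec, leastSquares, mulVec_mulVec,
    mul_nonsing_inv _ (isUnit_det_transpose_mul_self hA), one_mulVec, dotProduct_mulVec,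
    vecMul_transpose]

lemma leastSquares_mulVec_add (hA : Function.Injective A.mulVec) (v : ι → ℝ) (u : m → ℝ) :
    leastSquares A (A *ᵥ v + u) = v + leastSquares A u := by
  simp only [leastSquares, mulVec_add]
  rw [mulVec_mulVec, mulVec_mulVec, Matrix.mul_assoc,
    nonsing_inv_mul _ (isUnit_det_transpose_mul_self hA), one_mulVec]

lemma trace_hatMatrix_mul_transpose (hA : Function.Injective A.mulVec) :
    (hatMatrix A * (hatMatrix A)ᵀ).trace = Fintype.card ι := by
  have hinv := nonsing_inv_mul _ (isUnit_det_transpose_mul_self hA)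
  have hsymm : (hatMatrix A)ᵀ = hatMatrix A := by
    simp only [hatMatrix, transpose_mul, transpose_nonsing_inv, transpose_transpose,
      Matrix.mul_assoc]
  have hidem : hatMatrix A * hatMatrix A = hatMatrix A := by
    calc hatMatrix A * hatMatrix A = A * ((Aᵀ * A)⁻¹ * (Aᵀ * A)) * (Aᵀ * A)⁻¹ * Aᵀ := by
          simp only [hatMatrix, Matrix.mul_assoc]
      _ = hatMatrix A := by rw [hinv, Matrix.mul_one, hatMatrix]
  rw [hsymm, hidem, hatMatrix, Matrix.mul_assoc, trace_mul_comm, Matrix.mul_assoc, hinv, trace_one]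

end LeastSquares

section ModelAveraging

variable {X : Matrix (Fin n) (Fin k₁ ⊕ Fin k₂) ℝ}

lemma mulVec_sumElim_zero (X : Matrix (Fin n) (Fin k₁ ⊕ Fin k₂) ℝ) (w : Fin k₁ → ℝ) :
    X *ᵥ Sum.elim w (fun _ => 0) = X1 X *ᵥ w := by
  ext i
  simp [mulVec, dotProduct, X1]

lemma X1_mulVec_injective (hX : Function.Injective X.mulVec) :
    Function.Injective (X1 X).mulVec := by
  intro v w h
  rw [← mulVec_sumElim_zero, ← mulVec_sumElim_zero] at h
  funext i
  exact congrFun (hX h) (Sum.inl i)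

lemma mulVec_betaR_dotProduct_self (hX : Function.Injective X.mulVec) (Y : Fin n → ℝ) :
    X *ᵥ betaR X Y ⬝ᵥ X *ᵥ betaR X Y = X *ᵥ betaR X Y ⬝ᵥ Y := by
  rw [betaR, mulVec_sumElim_zero]
  exact mulVec_dotProduct_mulVec_leastSquares (X1_mulVec_injective hX) _ Y

/-- The squared distance `‖Xβ̂(U) - Xβ̂(R)‖²` between the fitted values of the two models, the
statistic on which the weight `λ̂` depends. -/
def fitGap (X : Matrix (Fin n) (Fin k₁ ⊕ Fin k₂) ℝ) (Y : Fin n → ℝ) : ℝ :=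
  X *ᵥ (betaU X Y - betaR X Y) ⬝ᵥ X *ᵥ (betaU X Y - betaR X Y)

lemma fitGap_nonneg (X : Matrix (Fin n) (Fin k₁ ⊕ Fin k₂) ℝ) (Y : Fin n → ℝ) :
    0 ≤ fitGap X Y :=
  dotProduct_star_self_nonneg (X *ᵥ (betaU X Y - betaR X Y))

lemma rR_sub_rU (hX : Function.Injective X.mulVec) (σ2 : ℝ) (Y : Fin n → ℝ) :
    rR X σ2 Y - rU X σ2 Y = fitGap X Y - 2 * σ2 * k₂ := by
  have hR := mulVec_betaR_dotProduct_self hX Y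
  have hRU : X *ᵥ betaR X Y ⬝ᵥ X *ᵥ betaU X Y = X *ᵥ betaR X Y ⬝ᵥ Y :=
    mulVec_dotProduct_mulVec_leastSquares hX (betaR X Y) Y
  have hUR := dotProduct_comm (X *ᵥ betaU X Y) (X *ᵥ betaR X Y)
  simp only [rR, rU, fitGap, dotProduct_transpose_mul_self_mulVec, mulVec_sub, sub_dotProduct,
    dotProduct_sub]
  linarith

lemma lamHat_eq_sigmoid (α σ2 : ℝ) (X : Matrix (Fin n) (Fin k₁ ⊕ Fin k₂) ℝ) (Y : Fin n → ℝ) :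
    lamHat α σ2 X Y = sigmoid (-(α * (rR X σ2 Y - rU X σ2 Y) / σ2)) := by
  have hexp : Real.exp (-(α * rU X σ2 Y) / σ2) = Real.exp (-(α * rR X σ2 Y) / σ2) *
      Real.exp (α * (rR X σ2 Y - rU X σ2 Y) / σ2) := by
    rw [← Real.exp_add]
    ring_nf
  rw [lamHat, hexp, sigmoid_def, neg_neg]
  field_simp

lemma sigmoid_le_exp (x : ℝ) : sigmoid x ≤ Real.exp x := by
  rw [sigmoid_def, ← inv_inv (Real.exp x), ← Real.exp_neg]
  gcongr
  linarith

lemma sigmoid_sub_mul_mul_le (a : ℝ) {b t : ℝ} (hb : 0 < b) (ht : 0 ≤ t) :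
    sigmoid (a - b * t) * t ≤ Real.exp a / b := by
  calc sigmoid (a - b * t) * t ≤ Real.exp (a - b * t) * t := by gcongr; exact sigmoid_le_exp _
    _ = Real.exp a / b * (b * t * Real.exp (-(b * t))) := by
      rw [sub_eq_add_neg, Real.exp_add]
      field_simp
    _ ≤ Real.exp a / b := mul_le_of_le_one_right (by positivity)
      ((mul_exp_neg_le_exp_neg_one _).trans (exp_le_one_iff.2 (by norm_num)))

/-- The bound `e^{2αk₂} σ² / α` on the squared bias, in the metric of `X'X`, that averaging with
the restricted estimator introduces. -/
def averagingBiasBound (k₂ : ℕ) (α σ2 : ℝ) : ℝ :=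
  Real.exp (2 * α * k₂) / (α / σ2)

variable {α σ2 : ℝ}

lemma sq_lamHat_mul_fitGap_le (hX : Function.Injective X.mulVec) (hα : 0 < α) (hσ2 : 0 < σ2)
    (Y : Fin n → ℝ) : lamHat α σ2 X Y ^ 2 * fitGap X Y ≤ averagingBiasBound k₂ α σ2 := by
  have hexponent : -(α * (rR X σ2 Y - rU X σ2 Y) / σ2) = 2 * α * k₂ - α / σ2 * fitGap X Y := by
    rw [rR_sub_rU hX]
    field_simp
    ring
  rw [lamHat_eq_sigmoid, hexponent]
  set l := sigmoid (2 * α * k₂ - α / σ2 * fitGap X Y)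
  calc l ^ 2 * fitGap X Y ≤ l * fitGap X Y := by
        gcongr
        · exact fitGap_nonneg X Y
        · exact pow_le_of_le_one (sigmoid_nonneg _) (sigmoid_le_one _) two_ne_zero
    _ ≤ averagingBiasBound k₂ α σ2 := sigmoid_sub_mul_mul_le _ (by positivity) (fitGap_nonneg X Y)

lemma mavg_mulVec_add_sub (hX : Function.Injective X.mulVec) (α σ2 : ℝ)
    (β : Fin k₁ ⊕ Fin k₂ → ℝ) (u : Fin n → ℝ) :
    mavg α σ2 X (X *ᵥ β + u) - β = leastSquares X u -
      lamHat α σ2 X (X *ᵥ β + u) • (betaU X (X *ᵥ β + u) - betaR X (X *ᵥ β + u)) := by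
  have hU : betaU X (X *ᵥ β + u) = β + leastSquares X u := leastSquares_mulVec_add hX β u
  rw [mavg, hU]
  module

lemma mulVec_mavg_sub_dotProduct_self_le (hX : Function.Injective X.mulVec) (hα : 0 < α)
    (hσ2 : 0 < σ2) (β : Fin k₁ ⊕ Fin k₂ → ℝ) (u : Fin n → ℝ) :
    X *ᵥ (mavg α σ2 X (X *ᵥ β + u) - β) ⬝ᵥ X *ᵥ (mavg α σ2 X (X *ᵥ β + u) - β) ≤
      2 * (hatMatrix X *ᵥ u ⬝ᵥ hatMatrix X *ᵥ u + averagingBiasBound k₂ α σ2) := by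
  have hbias := sq_lamHat_mul_fitGap_le hX hα hσ2 (X *ᵥ β + u)
  rw [mavg_mulVec_add_sub hX, mulVec_sub, mulVec_smul, mulVec_leastSquares]
  refine (sub_dotProduct_sub_self_le _ _).trans ?_
  rw [smul_dotProduct, dotProduct_smul, smul_smul, ← sq]
  gcongr
  exact hbias

end ModelAveraging

section SecondMoment

variable {ι m : Type*} [Fintype ι] [Fintype m] {τ : ℝ≥0}

/-- The second moment matrix of `P` is at most `τ I` in the Loewner order, stated through the
linear functionals `u ↦ a'u`. -/
def HasSecondMomentBound (P : Measure (ι → ℝ)) (τ : ℝ≥0) : Prop :=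
  ∀ a : ι → ℝ, ∫⁻ u, ENNReal.ofReal ((a ⬝ᵥ u) ^ 2) ∂P ≤ τ * ENNReal.ofReal (a ⬝ᵥ a)

lemma lintegral_mulVec_dotProduct_self_le {P : Measure (ι → ℝ)} (hP : HasSecondMomentBound P τ)
    (A : Matrix m ι ℝ) : ∫⁻ u, ENNReal.ofReal (A *ᵥ u ⬝ᵥ A *ᵥ u) ∂P ≤
      τ * ENNReal.ofReal (A * Aᵀ).trace := by
  have hrow (u : ι → ℝ) : ENNReal.ofReal (A *ᵥ u ⬝ᵥ A *ᵥ u) =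
      ∑ i, ENNReal.ofReal ((A.row i ⬝ᵥ u) ^ 2) := by
    rw [← ENNReal.ofReal_sum_of_nonneg fun i _ => sq_nonneg _]
    simp only [dotProduct, mulVec, sq, row_apply]
  have htrace : ENNReal.ofReal (A * Aᵀ).trace = ∑ i, ENNReal.ofReal (A.row i ⬝ᵥ A.row i) :=
    ENNReal.ofReal_sum_of_nonneg fun i _ => dotProduct_star_self_nonneg (A.row i)
  simp_rw [hrow]
  rw [lintegral_finsetSum _ fun i _ => by simp only [dotProduct]; fun_prop, htrace,
    Finset.mul_sum]
  exact Finset.sum_le_sum fun i _ => hP (A.row i)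

lemma measure_le_mulVec_dotProduct_self_le {P : Measure (ι → ℝ)} (hP : HasSecondMomentBound P τ)
    (A : Matrix m ι ℝ) {r : ℝ} (hr : 0 < r) :
    P {u | r ≤ A *ᵥ u ⬝ᵥ A *ᵥ u} ≤ τ * ENNReal.ofReal (A * Aᵀ).trace / ENNReal.ofReal r := by
  have hmeas : Measurable fun u : ι → ℝ => ENNReal.ofReal (A *ᵥ u ⬝ᵥ A *ᵥ u) := by
    simp only [dotProduct, mulVec]
    fun_prop
  calc P {u | r ≤ A *ᵥ u ⬝ᵥ A *ᵥ u}
      ≤ P {u | ENNReal.ofReal r ≤ ENNReal.ofReal (A *ᵥ u ⬝ᵥ A *ᵥ u)} :=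
        measure_mono fun u hu => ENNReal.ofReal_le_ofReal hu
    _ ≤ (∫⁻ u, ENNReal.ofReal (A *ᵥ u ⬝ᵥ A *ᵥ u) ∂P) / ENNReal.ofReal r :=
        meas_ge_le_lintegral_div hmeas.aemeasurable (by simpa using hr) ENNReal.ofReal_ne_top
    _ ≤ τ * ENNReal.ofReal (A * Aᵀ).trace / ENNReal.ofReal r := by
        gcongr
        exact lintegral_mulVec_dotProduct_self_le hP A

open ProbabilityTheory

lemma hasSecondMomentBound_pi {μ : ι → Measure ℝ} [∀ i, IsProbabilityMeasure (μ i)]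
    (hL2 : ∀ i, MemLp id 2 (μ i)) (hmean : ∀ i, ∫ x, x ∂μ i = 0) (hvar : ∀ i, Var[id; μ i] ≤ τ) :
    HasSecondMomentBound (Measure.pi μ) τ := by
  intro a
  have hmul (i : ι) : MemLp (fun x => a i * x) 2 (μ i) := (hL2 i).const_mul (a i)
  have hcoord (i : ι) : MemLp (fun u : ι → ℝ => a i * u i) 2 (Measure.pi μ) :=
    (hmul i).comp_measurePreserving (measurePreserving_eval μ i)
  have hsum : MemLp (fun u => a ⬝ᵥ u) 2 (Measure.pi μ) := memLp_finsetSum _ fun i _ => hcoord i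
  have hzero : ∫ u, a ⬝ᵥ u ∂Measure.pi μ = 0 := by
    simp only [dotProduct]
    rw [integral_finsetSum _ fun i _ => (hcoord i).integrable one_le_two]
    refine Finset.sum_eq_zero fun i _ => ?_
    rw [integral_comp_eval (μ := μ) (f := fun x => a i * x) (hmul i).1,
      integral_const_mul, hmean, mul_zero]
  have hVar : Var[fun u => a ⬝ᵥ u; Measure.pi μ] = ∑ i, a i ^ 2 * Var[id; μ i] := by
    calc Var[fun u => a ⬝ᵥ u; Measure.pi μ]
      _ = Var[∑ i, fun u : ι → ℝ => a i * u i; Measure.pi μ] := by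
        rw [Finset.sum_fn]
        simp only [dotProduct]
      _ = ∑ i, Var[fun x => a i * x; μ i] := variance_sum_pi hmul
      _ = ∑ i, a i ^ 2 * Var[id; μ i] :=
        Finset.sum_congr rfl fun i _ => variance_const_mul (a i) id (μ i)
  rw [← ofReal_integral_eq_lintegral_ofReal hsum.integrable_sq (ae_of_all _ fun _ => sq_nonneg _),
    ← variance_of_integral_eq_zero hsum.aestronglyMeasurable.aemeasurable hzero, hVar,
    ← ENNReal.ofReal_coe_nnreal, ← ENNReal.ofReal_mul τ.coe_nonneg]
  refine ENNReal.ofReal_le_ofReal ?_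
  rw [dotProduct, Finset.mul_sum]
  refine Finset.sum_le_sum fun i _ => ?_
  nlinarith [hvar i, sq_nonneg (a i)]

lemma pi_withDensity_ofReal {Ω : ι → Type*} [∀ i, MeasurableSpace (Ω i)]
    (μ : ∀ i, Measure (Ω i)) [∀ i, SigmaFinite (μ i)] {f : ∀ i, Ω i → ℝ}
    (hf : ∀ i, Integrable (f i) (μ i)) (hf_nonneg : ∀ i x, 0 ≤ f i x) :
    Measure.pi (fun i => (μ i).withDensity fun x => ENNReal.ofReal (f i x)) =
      (Measure.pi μ).withDensity fun x => ENNReal.ofReal (∏ i, f i (x i)) := by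
  refine Measure.pi_eq fun S hS => ?_
  rw [withDensity_apply _ (MeasurableSet.univ_pi hS), Measure.restrict_pi_pi,
    ← ofReal_integral_eq_lintegral_ofReal (Integrable.fintype_prod_dep fun i => (hf i).restrict)
      (ae_of_all _ fun x => Finset.prod_nonneg fun i _ => hf_nonneg i _),
    integral_fintype_prod_eq_prod,
    ENNReal.ofReal_prod_of_nonneg fun i _ => integral_nonneg (hf_nonneg i)]
  refine Finset.prod_congr rfl fun i _ => ?_
  rw [withDensity_apply _ (hS i), ofReal_integral_eq_lintegral_ofReal (hf i).restrict
    (ae_of_all _ (hf_nonneg i))]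

lemma gaussPi_eq_pi_gaussianReal (ι : Type*) [Fintype ι] (hτ : τ ≠ 0) :
    gaussPi ι τ = Measure.pi fun _ : ι => gaussianReal 0 τ := by
  have hdensity (x : ι → ℝ) : (2 * π * (τ : ℝ)) ^ (-(Fintype.card ι : ℝ) / 2) *
      Real.exp (-(enorm2 x) ^ 2 / (2 * τ)) = ∏ i, gaussianPDFReal 0 τ (x i) := by
    simp only [gaussianPDFReal, Finset.prod_mul_distrib, ← Real.exp_sum, Finset.prod_const,
      Finset.card_univ, sub_zero]
    congr 1
    · rw [Real.sqrt_eq_rpow, ← Real.rpow_neg (by positivity), ← Real.rpow_natCast,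
        ← Real.rpow_mul (by positivity)]
      ring_nf
    · simp only [enorm2_sq, dotProduct, ← sq, ← Finset.sum_div, Finset.sum_neg_distrib]
  simp_rw [gaussPi, hdensity, gaussianReal_of_var_ne_zero 0 hτ, volume_pi]
  exact (pi_withDensity_ofReal _ (fun _ => integrable_gaussianPDFReal 0 τ)
    fun _ => gaussianPDFReal_nonneg 0 τ).symm

lemma hasSecondMomentBound_gaussPi {s : ℝ} (hs : 0 < s) :
    HasSecondMomentBound (gaussPi ι s) s.toNNReal := by
  lift s to ℝ≥0 using hs.le
  rw [Real.toNNReal_coe, gaussPi_eq_pi_gaussianReal ι (by exact_mod_cast hs.ne')]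
  exact hasSecondMomentBound_pi (fun _ => memLp_id_gaussianReal 2)
    (fun _ => integral_id_gaussianReal) fun _ => variance_id_gaussianReal.le

end SecondMoment

section UniformConsistency

lemma map_measure_le_sqrt_mul_enorm2_mavg_sub_le {P : Measure (Fin n → ℝ)} {τ : ℝ≥0}
    (hP : HasSecondMomentBound P τ) (hn : 0 < n) {c : ℝ} (hc : 0 < c)
    {X : Matrix (Fin n) (Fin k₁ ⊕ Fin k₂) ℝ} (hX : ∀ v, c * (n * (v ⬝ᵥ v)) ≤ X *ᵥ v ⬝ᵥ X *ᵥ v)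
    {α σ2 : ℝ} (hα : 0 < α) (hσ2 : 0 < σ2) (β : Fin k₁ ⊕ Fin k₂ → ℝ) {M : ℝ} (hM : 0 ≤ M)
    (hM' : 0 < c / 2 * M ^ 2 - averagingBiasBound k₂ α σ2) :
    P.map (fun u => X *ᵥ β + u) {Y | M ≤ √n * enorm2 (mavg α σ2 X Y - β)} ≤
      τ * (k₁ + k₂ : ℕ) / ENNReal.ofReal (c / 2 * M ^ 2 - averagingBiasBound k₂ α σ2) := by
  have hinj : Function.Injective X.mulVec :=
    mulVec_injective_of_forall_mul_le (c := c * n) (by positivity) fun v => by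
      simpa only [mul_assoc] using hX v
  have htail := measure_le_mulVec_dotProduct_self_le hP (hatMatrix X) hM'
  rw [trace_hatMatrix_mul_transpose hinj, Fintype.card_sum, Fintype.card_fin, Fintype.card_fin,
    ENNReal.ofReal_natCast] at htail
  change P.map (MeasurableEquiv.addLeft (X *ᵥ β)) _ ≤ _
  rw [MeasurableEquiv.map_apply]
  refine (measure_mono fun u hu => ?_).trans htail
  set v := mavg α σ2 X (X *ᵥ β + u) - β
  have hMv : M ^ 2 ≤ n * (v ⬝ᵥ v) := by
    have h := pow_le_pow_left₀ hM hu 2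
    rwa [mul_pow, Real.sq_sqrt n.cast_nonneg, enorm2_sq] at h
  have hloss : c * M ^ 2 ≤
      2 * (hatMatrix X *ᵥ u ⬝ᵥ hatMatrix X *ᵥ u + averagingBiasBound k₂ α σ2) :=
    calc c * M ^ 2 ≤ c * (n * (v ⬝ᵥ v)) := by gcongr
      _ ≤ X *ᵥ v ⬝ᵥ X *ᵥ v := hX v
      _ ≤ _ := mulVec_mavg_sub_dotProduct_self_le hinj hα hσ2 β u
  change c / 2 * M ^ 2 - averagingBiasBound k₂ α σ2 ≤ _
  linarith

lemma tendsto_iSup_measure_le_mul_of_tendsto_div {B : Type*} {Ω : ℕ → Type*}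
    [∀ n, MeasurableSpace (Ω n)] {P : ∀ n, B → Measure (Ω n)} {Z : ∀ n, B → Ω n → ℝ} {N : ℕ}
    {r c : ℕ → ℝ} {ε : ℝ} (hZ : ∀ n b ω, 0 ≤ Z n b ω) (hr : ∀ᶠ n in atTop, 0 < r n)
    (htight : Tendsto (fun M : ℝ => ⨆ n, ⨆ (_ : N ≤ n), ⨆ b, P n b {ω | M ≤ r n * Z n b ω})
      atTop (𝓝 0))
    (hc : Tendsto (fun n => c n / r n) atTop (𝓝 0)) (hε : 0 < ε) :
    Tendsto (fun n => ⨆ b, P n b {ω | ε ≤ c n * Z n b ω}) atTop (𝓝 0) := by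
  rw [ENNReal.tendsto_nhds_zero] at htight ⊢
  intro δ hδ
  obtain ⟨M, hMδ, hM⟩ := ((htight δ hδ).and (eventually_gt_atTop 0)).exists
  filter_upwards [eventually_ge_atTop N, hr, hc.eventually_le_const (div_pos hε hM)]
    with n hn hrn hcn
  refine le_trans (iSup_mono fun b => measure_mono fun ω hω => ?_) ((le_iSup₂ (f := fun n _ =>
    ⨆ b, P n b {ω | M ≤ r n * Z n b ω}) n hn).trans hMδ)
  have h : ε ≤ ε / M * (r n * Z n b ω) :=
    calc ε ≤ c n * Z n b ω := hω
      _ = c n / r n * (r n * Z n b ω) := by field_simp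
      _ ≤ ε / M * (r n * Z n b ω) := by have := hZ n b ω; gcongr
  rwa [div_mul_eq_mul_div, le_div_iff₀ hM, mul_le_mul_iff_right₀ hε] at h

lemma exists_pos_forall_mul_le_mulVec_dotProduct_self {ι : Type*} [Fintype ι] {N : ℕ}
    (hN : 0 < N) {X : ∀ n : ℕ, Matrix (Fin n) ι ℝ}
    (hX : ∀ n, N ≤ n → Function.Injective (X n).mulVec) {Q : Matrix ι ι ℝ} (hQ : Q.PosDef)
    (hlim : Tendsto (fun n : ℕ => (n : ℝ)⁻¹ • ((X n)ᵀ * X n)) atTop (𝓝 Q)) :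
    ∃ c : ℝ, 0 < c ∧ ∀ n, N ≤ n → ∀ v, c * (n * (v ⬝ᵥ v)) ≤ X n *ᵥ v ⬝ᵥ X n *ᵥ v := by
  have hpos (n : ℕ) (hn : N ≤ n) : (0 : ℝ) < n := by exact_mod_cast hN.trans_le hn
  obtain ⟨c, hc, hle⟩ := exists_pos_forall_mul_dotProduct_self_le
    (fun n hn => (posDef_transpose_mul_self (hX n hn)).smul (inv_pos.2 (hpos n hn))) hQ hlim
  refine ⟨c, hc, fun n hn v => ?_⟩
  have h := hle n hn v
  rw [smul_mulVec, dotProduct_smul, dotProduct_transpose_mul_self_mulVec, smul_eq_mul,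
    le_inv_mul_iff₀ (hpos n hn)] at h
  linarith

theorem statement4_general {X : ∀ n : ℕ, Matrix (Fin n) (Fin k₁ ⊕ Fin k₂) ℝ} {c₀ : ℝ}
    (hc₀ : 0 < c₀)
    (hX : ∀ n, k₁ + k₂ ≤ n → ∀ v, c₀ * (n * (v ⬝ᵥ v)) ≤ X n *ᵥ v ⬝ᵥ X n *ᵥ v)
    {P : ∀ n : ℕ, Measure (Fin n → ℝ)} {τ : ℝ≥0} (hP : ∀ n, HasSecondMomentBound (P n) τ)
    {α σ2 : ℝ} (hα : 0 < α) (hσ2 : 0 < σ2) :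
    Tendsto (fun M : ℝ => ⨆ n, ⨆ (_ : k₁ + k₂ ≤ n), ⨆ β : Fin k₁ ⊕ Fin k₂ → ℝ,
        (P n).map (fun u => X n *ᵥ β + u) {Y | M ≤ √n * enorm2 (mavg α σ2 (X n) Y - β)})
      atTop (𝓝 0) ∧
    ∀ ε : ℝ, 0 < ε → ∀ c : ℕ → ℝ, Tendsto (fun n : ℕ => c n / √n) atTop (𝓝 0) →
      Tendsto (fun n : ℕ => ⨆ β : Fin k₁ ⊕ Fin k₂ → ℝ,
          (P n).map (fun u => X n *ᵥ β + u) {Y | ε ≤ c n * enorm2 (mavg α σ2 (X n) Y - β)})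
        atTop (𝓝 0) := by
  have hquad : Tendsto (fun M : ℝ => c₀ / 2 * M ^ 2 - averagingBiasBound k₂ α σ2) atTop atTop :=
    tendsto_atTop_add_const_right _ _
      ((tendsto_pow_atTop two_ne_zero).const_mul_atTop (half_pos hc₀))
  have hbound : Tendsto (fun M : ℝ => τ * (k₁ + k₂ : ℕ) /
      ENNReal.ofReal (c₀ / 2 * M ^ 2 - averagingBiasBound k₂ α σ2)) atTop (𝓝 0) := by
    simpa using ENNReal.Tendsto.const_div (ENNReal.tendsto_ofReal_nhds_top.2 hquad)
      (.inr (by finiteness : (τ * (k₁ + k₂ : ℕ) : ℝ≥0∞) ≠ ∞))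
  have htight : Tendsto (fun M : ℝ => ⨆ n, ⨆ (_ : k₁ + k₂ ≤ n), ⨆ β : Fin k₁ ⊕ Fin k₂ → ℝ,
      (P n).map (fun u => X n *ᵥ β + u) {Y | M ≤ √n * enorm2 (mavg α σ2 (X n) Y - β)})
      atTop (𝓝 0) := by
    refine tendsto_of_tendsto_of_tendsto_of_le_of_le' tendsto_const_nhds hbound
      (Eventually.of_forall fun _ => bot_le) ?_
    filter_upwards [eventually_gt_atTop 0, hquad.eventually_gt_atTop 0] with M hM hM'
    refine iSup_le fun n => iSup_le fun hn => iSup_le fun β => ?_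
    rcases n.eq_zero_or_pos with rfl | hn0
    · simp [hM.not_ge]
    · exact map_measure_le_sqrt_mul_enorm2_mavg_sub_le (hP n) hn0 hc₀ (hX n hn) hα hσ2 β hM.le hM'
  exact ⟨htight, fun ε hε c hc => tendsto_iSup_measure_le_mul_of_tendsto_div
    (fun _ _ _ => Real.sqrt_nonneg _)
    (by filter_upwards [eventually_gt_atTop 0] with n hn using by positivity) htight hc hε⟩

end UniformConsistency

/-- uniform `√n`-consistency of the model averaging estimator, and the resulting
uniform `c_n`-consistency for any `c_n = o(√n)`. -/
theorem statement4 {k₁ k₂ : ℕ} (hk₁ : 0 < k₁) (hk₂ : 0 < k₂)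
    (X : ∀ n : ℕ, Matrix (Fin n) (Fin k₁ ⊕ Fin k₂) ℝ)
    (hX : ∀ n, k₁ + k₂ ≤ n → (X n).rank = k₁ + k₂)
    (Q : Matrix (Fin k₁ ⊕ Fin k₂) (Fin k₁ ⊕ Fin k₂) ℝ) (hQ : Q.PosDef)
    (hlim : Tendsto (fun n : ℕ => (n : ℝ)⁻¹ • ((X n)ᵀ * X n)) atTop (𝓝 Q))
    (σ α : ℝ) (hσ : 0 < σ) (hα : 0 < α) :
    Tendsto (fun M : ℝ => ⨆ n, ⨆ (_ : k₁ + k₂ ≤ n), ⨆ β : (Fin k₁ ⊕ Fin k₂) → ℝ,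
        Pmeas (X n) β (σ ^ 2)
          {Y | M ≤ Real.sqrt n * enorm2 (mavg α (σ ^ 2) (X n) Y - β)})
      atTop (𝓝 (0 : ℝ≥0∞)) ∧
    ∀ ε : ℝ, 0 < ε → ∀ c : ℕ → ℝ, (∀ n, 0 ≤ c n) →
      Tendsto (fun n : ℕ => c n / Real.sqrt n) atTop (𝓝 (0 : ℝ)) →
      Tendsto (fun n : ℕ => ⨆ β : (Fin k₁ ⊕ Fin k₂) → ℝ,
          Pmeas (X n) β (σ ^ 2)
            {Y | ε ≤ c n * enorm2 (mavg α (σ ^ 2) (X n) Y - β)})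
        atTop (𝓝 (0 : ℝ≥0∞)) := by
  have hinj (n : ℕ) (hn : k₁ + k₂ ≤ n) : Function.Injective (X n).mulVec :=
    mulVec_injective_of_rank_eq_card (by simpa using hX n hn)
  obtain ⟨c₀, hc₀, hgram⟩ := exists_pos_forall_mul_le_mulVec_dotProduct_self
    (Nat.add_pos_left hk₁ k₂) hinj hQ hlim
  obtain ⟨htight, hrate⟩ := statement4_general hc₀ hgram
    (fun n => hasSecondMomentBound_gaussPi (pow_pos hσ 2)) hα (pow_pos hσ 2)
  exact ⟨htight, fun ε hε c _ => hrate ε hε c⟩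

end
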